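/- For every odd x ∈ {1,…,2^n−3}, applying the canonical phases with respect to x, in the listed order, to the canonical policy π_x yields the canonical policy π_{x+1}. -/

import Mathlib

/-! ## The Markov decision process `𝔅_n` -/

/-- Vertices of the MDP `𝔅_n`: a transportation vertex `t`, a sink `s`, a dummy vertex `d`,
and vertices `a i`, `b i` for `i ∈ {1,…,n}`. -/
inductive BV : Type where
  | t : BV
  | s : BV
  | d : BV
  | a : ℕ → BV
  | b : ℕ → BV
deriving DecidableEq

/-- The vertex `a i` for `i ∈ {1,…,n+1}`, with the convention `a (n+1) = s`. -/
def aN (n i : ℕ) : BV := if i = n + 1 then BV.s else BV.a i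

/-- The vertex `b i` for `i ∈ {1,…,n+1}`, with the convention `b (n+1) = d`. -/
def bN (n i : ℕ) : BV := if i = n + 1 then BV.d else BV.b i

/-- The vertex set of `𝔅_n`. -/
def IsBVertex (n : ℕ) : BV → Prop
  | BV.t => True
  | BV.s => True
  | BV.d => True
  | BV.a i => 1 ≤ i ∧ i ≤ n
  | BV.b i => 1 ≤ i ∧ i ≤ n

/-- The edge relation of `𝔅_n`: travel, enter, skip, board, stay, leave edges,
the edge `(d,s)` and the self-loop `(s,s)`. -/
def BEdge (n : ℕ) (u v : BV) : Prop :=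
  (∃ i, 1 ≤ i ∧ i ≤ n ∧ u = BV.t ∧ v = BV.a i) ∨
  (∃ i, 1 ≤ i ∧ i ≤ n ∧ u = BV.a i ∧ v = BV.b i) ∨
  (∃ i, 1 ≤ i ∧ i ≤ n ∧ u = BV.a i ∧ v = aN n (i + 1)) ∨
  (∃ i, 1 ≤ i ∧ i ≤ n ∧ u = BV.a i ∧ v = BV.t) ∨
  (∃ i, 1 ≤ i ∧ i ≤ n ∧ u = BV.b i ∧ v = bN n (i + 1)) ∨
  (∃ i, 1 ≤ i ∧ i ≤ n ∧ u = BV.b i ∧ v = aN n (i + 1)) ∨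
  (u = BV.d ∧ v = BV.s) ∨ (u = BV.s ∧ v = BV.s)

/-- The reward function of `𝔅_n`: `r(enter i) = 2^i`, `r(stay i) = 3/4`,
`r(board i) = -2^i + 5/4`, and reward `0` on all other edges. -/
def rB (n : ℕ) (u v : BV) : ℚ :=
  match u, v with
  | BV.a i, BV.b j => if i = j then 2 ^ i else 0
  | BV.a i, BV.t => -(2 ^ i) + 5 / 4
  | BV.b i, BV.b j => if j = i + 1 then 3 / 4 else 0
  | BV.b i, BV.d => if i = n then 3 / 4 else 0
  | _, _ => 0

/-- A policy for `𝔅_n` chooses an outgoing edge at every vertex. -/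
def IsBPolicy (n : ℕ) (π : BV → BV) : Prop := ∀ u, IsBVertex n u → BEdge n u (π u)

/-- A policy is weak unichain if it reaches the sink `s` from every vertex. -/
def BWeakUnichain (n : ℕ) (π : BV → BV) : Prop :=
  ∀ u, IsBVertex n u → ∃ k, π^[k] u = BV.s

open Classical in
/-- The value of a vertex `v` w.r.t. a (weak unichain) policy `π`:
the sum of the rewards along the path that `π` takes from `v` to the sink `s`. -/
noncomputable def BVal (n : ℕ) (π : BV → BV) (v : BV) : ℚ :=
  if h : ∃ k, π^[k] v = BV.s then
    ∑ i ∈ Finset.range (Nat.find h), rB n (π^[i] v) (π^[i + 1] v)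
  else 0

/-- The reduced costs of the edge `(u,v)` w.r.t. the policy `π`. -/
noncomputable def zB (n : ℕ) (π : BV → BV) (u v : BV) : ℚ :=
  rB n u v + BVal n π v - BVal n π u

/-- The edge `(u,v)` is an improving switch for `π` if its reduced costs are positive. -/
def BImproving (n : ℕ) (π : BV → BV) (u v : BV) : Prop :=
  BEdge n u v ∧ 0 < zB n π u v

/-- The Bland numbering `𝒩_{𝔅_n}` of the edges of `𝔅_n`. -/
def NB (n : ℕ) (u v : BV) : ℕ :=
  match u, v with
  | BV.t, BV.a i => i
  | BV.a i, BV.b _ => n + 1 + 5 * (i - 1)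
  | BV.a i, BV.a _ => n + 2 + 5 * (i - 1)
  | BV.a i, BV.s => n + 2 + 5 * (i - 1)
  | BV.a i, BV.t => n + 3 + 5 * (i - 1)
  | BV.b i, BV.b _ => n + 4 + 5 * (i - 1)
  | BV.b i, BV.d => n + 4 + 5 * (i - 1)
  | BV.b i, BV.a _ => n + 5 + 5 * (i - 1)
  | BV.b i, BV.s => n + 5 + 5 * (i - 1)
  | BV.d, BV.s => 6 * n + 1
  | BV.s, BV.s => 6 * n + 2
  | _, _ => 0

/-- One step of Bland's policy iteration with edge numbering `N`:
apply the improving switch with the smallest number. -/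
def IsBlandStep (n : ℕ) (N : BV → BV → ℕ) (π π' : BV → BV) : Prop :=
  ∃ u v, BImproving n π u v ∧ (∀ u' v', BImproving n π u' v' → N u v ≤ N u' v') ∧
    π' = Function.update π u v

/-- `BlandReaches n N π ψ` says that Bland's policy iteration started at `π` visits `ψ`. -/
def BlandReaches (n : ℕ) (N : BV → BV → ℕ) : (BV → BV) → (BV → BV) → Prop :=
  Relation.ReflTransGen (IsBlandStep n N)

/-- The canonical policy `π_0` for `0`: `travel 1`, `skip i` and `leave i` are active. -/
def pi0 (n : ℕ) : BV → BV := fun u =>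
  match u with
  | BV.t => BV.a 1
  | BV.a i => aN n (i + 1)
  | BV.b i => aN n (i + 1)
  | BV.d => BV.s
  | BV.s => BV.s

/-- The optimal policy `π_*`: `travel 1`, `enter i` for all `i`, `leave j` for `j < n`,
and `stay n` are active. -/
def piStar (n : ℕ) : BV → BV := fun u =>
  match u with
  | BV.t => BV.a 1
  | BV.a i => BV.b i
  | BV.b i => if i = n then BV.d else BV.a (i + 1)
  | BV.d => BV.s
  | BV.s => BV.s

/-! ## Bits and canonical policies -/

/-- The least significant set bit `ℓ_1(x)` (1-based). -/
noncomputable def lsb (x : ℕ) : ℕ := sInf {i | 1 ≤ i ∧ Nat.testBit x (i - 1)}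

/-- The most significant set bit `m(x)` (1-based). -/
noncomputable def msb1 (x : ℕ) : ℕ := sSup {i | 1 ≤ i ∧ Nat.testBit x (i - 1)}

/-- The least unset bit `ℓ_0(x)` (1-based). -/
noncomputable def lzero (x : ℕ) : ℕ := sInf {i | 1 ≤ i ∧ ¬ Nat.testBit x (i - 1)}

/-- `L_i(x) = max { j ≤ i-2 | x_j = 1 or j = 1 }` (1-based bits). -/
noncomputable def Lfun (i x : ℕ) : ℕ :=
  sSup {j | 1 ≤ j ∧ j ≤ i - 2 ∧ (Nat.testBit x (j - 1) ∨ j = 1)}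

/-- `IsCanonical n x π` says that `π` is the canonical policy `π_x` for `x`. -/
noncomputable def IsCanonical (n x : ℕ) (π : BV → BV) : Prop :=
  IsBPolicy n π ∧
  if x = 0 then
    π BV.t = BV.a 1 ∧
      ∀ i, 1 ≤ i → i ≤ n → π (BV.a i) = aN n (i + 1) ∧ π (BV.b i) = aN n (i + 1)
  else
    π BV.t = BV.a (lsb x) ∧
    π (BV.b (msb1 x)) = aN n (msb1 x + 1) ∧
    (∀ i, msb1 x < i → i ≤ n → π (BV.a i) = aN n (i + 1) ∧ π (BV.b i) = aN n (i + 1)) ∧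
    ∀ i, 1 ≤ i → i ≤ n → Nat.testBit x (i - 1) →
      π (BV.a i) = BV.b i ∧
      (i = 2 → π (BV.b 1) = BV.a 2 ∧ (¬ Nat.testBit x 0 → π (BV.a 1) = BV.a 2)) ∧
      (3 ≤ i → Nat.testBit x (i - 2) → π (BV.b (i - 1)) = BV.a i) ∧
      (3 ≤ i → ¬ Nat.testBit x (i - 2) →
        π (BV.b (i - 1)) = BV.b i ∧ π (BV.a (i - 1)) = BV.a i ∧
        π (BV.b (i - 2)) = BV.a (i - 1) ∧
        (Lfun i x < i - 2 →
          ∀ j, Lfun i x + 1 ≤ j → j ≤ i - 2 →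
            π (BV.a j) = BV.t ∧ π (BV.b (j - 1)) = BV.b j) ∧
        (Lfun i x = 1 → ¬ Nat.testBit x 0 → π (BV.a 1) = BV.t))

/-- Activating a list of edges in a policy, from left to right. -/
def activateList (π : BV → BV) (L : List (BV × BV)) : BV → BV :=
  L.foldl (fun σ e => Function.update σ e.1 e.2) π

/-- The canonical phases w.r.t. an odd number `x` (with `ℓ := ℓ_0(x)`), as a list of edges
to be activated in order. -/
noncomputable def phaseList (n x : ℕ) : List (BV × BV) :=
  let ℓ := lzero x
  (if Nat.testBit x ℓ then [(BV.b ℓ, aN n (ℓ + 1))] else []) ++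
  (if Nat.testBit x ℓ ∨ msb1 x < ℓ then [(BV.b (ℓ - 1), BV.b ℓ)] else []) ++
  [(BV.a ℓ, BV.b ℓ), (BV.t, BV.a ℓ)] ++
  ((List.range (ℓ - 2)).map fun j => (BV.a (j + 1), BV.t)) ++
  [(BV.a (ℓ - 1), BV.a ℓ)] ++
  (((List.range (ℓ - 3)).reverse).map fun j => (BV.b (j + 1), BV.b (j + 2))) ++
  (if ℓ = 2 then [(BV.b 1, BV.a 2)] else [])

/-! ## The Markov decision process `𝔇_n` -/

/-- Vertices of `𝔇_n`: the original vertices (`base`), and for every edge `(v,w)` of `𝔅_n`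
other than the self-loop, the gadget vertices `x v w`, `y v w`, `z v w`. -/
inductive DV : Type where
  | base : BV → DV
  | x : BV → BV → DV
  | y : BV → BV → DV
  | z : BV → BV → DV
deriving DecidableEq

/-- The edges of `𝔅_n` that get replaced by gadgets (all edges except the self-loop `(s,s)`). -/
def DEdgePair (n : ℕ) (v w : BV) : Prop := BEdge n v w ∧ v ≠ BV.s

/-- The vertex set of `𝔇_n`. -/
def IsDVertex (n : ℕ) : DV → Prop
  | DV.base v => IsBVertex n v
  | DV.x v w => DEdgePair n v w
  | DV.y v w => DEdgePair n v w
  | DV.z v w => DEdgePair n v w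

/-- The agent vertices of `𝔇_n` (all vertices except the randomization vertices `y v w`). -/
def IsDAgent (n : ℕ) : DV → Prop
  | DV.base v => IsBVertex n v
  | DV.x v w => DEdgePair n v w
  | DV.y _ _ => False
  | DV.z v w => DEdgePair n v w

/-- The agent edges of `𝔇_n`. -/
def DEdge (n : ℕ) (u u' : DV) : Prop :=
  (∃ v w, DEdgePair n v w ∧
    ((u = DV.base v ∧ u' = DV.x v w) ∨ (u = DV.x v w ∧ u' = DV.base v) ∨
     (u = DV.x v w ∧ u' = DV.y v w) ∨ (u = DV.z v w ∧ u' = DV.base w))) ∨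
  (u = DV.base BV.s ∧ u' = DV.base BV.s)

/-- The reward function of `𝔇_n`: the edge `(z v w, w)` carries the reward of the original
edge `(v,w)`; all other agent edges have reward `0`. -/
def rD (n : ℕ) (u u' : DV) : ℚ :=
  match u, u' with
  | DV.z v w, DV.base w' => if w' = w then rB n v w else 0
  | _, _ => 0

/-- A policy for `𝔇_n` chooses an outgoing agent edge at every agent vertex. -/
def IsDPolicy (n : ℕ) (π : DV → DV) : Prop := ∀ u, IsDAgent n u → DEdge n u (π u)

/-- `IsDVal n p π V` says that `V` satisfies the Bellman equations characterizing the value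
function of the policy `π` for `𝔇_n` with probabilities `p`, with `V s = 0`. -/
def IsDVal (n : ℕ) (p : BV → ℚ) (π : DV → DV) (V : DV → ℚ) : Prop :=
  V (DV.base BV.s) = 0 ∧
  (∀ u, IsDAgent n u → V u = rD n u (π u) + V (π u)) ∧
  (∀ v w, DEdgePair n v w →
    V (DV.y v w) = p v * V (DV.z v w) + (1 - p v) * V (DV.base v))

open Classical in
/-- The value function of a (weak unichain) policy `π` for `𝔇_n`: the unique solution of the
Bellman equations (normalized to `0` outside the vertex set). -/
noncomputable def DVal (n : ℕ) (p : BV → ℚ) (π : DV → DV) : DV → ℚ :=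
  if h : ∃! V : DV → ℚ, IsDVal n p π V ∧ ∀ u, ¬ IsDVertex n u → V u = 0 then
    h.exists.choose
  else fun _ => 0

/-- The reduced costs of an agent edge `(u,u')` of `𝔇_n` w.r.t. the policy `π`. -/
noncomputable def zD (n : ℕ) (p : BV → ℚ) (π : DV → DV) (u u' : DV) : ℚ :=
  rD n u u' + DVal n p π u' - DVal n p π u

/-- An agent edge of `𝔇_n` is an improving switch if its reduced costs are positive. -/
def DImproving (n : ℕ) (p : BV → ℚ) (π : DV → DV) (u u' : DV) : Prop :=
  DEdge n u u' ∧ 0 < zD n p π u u'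

/-- One (agent or positive-probability randomization) step of the process `𝔇_n` under `π`. -/
def DStep (n : ℕ) (p : BV → ℚ) (π : DV → DV) (u u' : DV) : Prop :=
  (IsDAgent n u ∧ u' = π u) ∨
  (∃ v w, DEdgePair n v w ∧ u = DV.y v w ∧
    ((u' = DV.z v w ∧ 0 < p v) ∨ (u' = DV.base v ∧ 0 < 1 - p v)))

/-- A policy for `𝔇_n` is weak unichain if it reaches `s` with probability one from every
vertex, i.e. `s` is reachable via active/positive-probability steps from every vertex. -/
def DWeakUnichain (n : ℕ) (p : BV → ℚ) (π : DV → DV) : Prop :=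
  ∀ u, IsDVertex n u → Relation.ReflTransGen (DStep n p π) u (DV.base BV.s)

/-- The twin policy of a policy `π` for `𝔅_n`: every vertex `v ≠ s` is `π v`-oriented. -/
def twin (π : BV → BV) : DV → DV := fun u =>
  match u with
  | DV.base v => if v = BV.s then DV.base BV.s else DV.x v (π v)
  | DV.x v w => if w = π v then DV.y v w else DV.base v
  | DV.y v w => DV.y v w
  | DV.z _ w => DV.base w

/-- The vertex numbering `𝒩_V` of `𝔅_n`: the order `(t, a 1, b 1, a 2, b 2, …, a n, b n, d, s)`. -/
def NV (n : ℕ) : BV → ℕ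
  | BV.t => 1
  | BV.a i => 2 * i
  | BV.b i => 2 * i + 1
  | BV.d => 2 * n + 2
  | BV.s => 2 * n + 3

/-- The specific probabilities `p_v = 2^{-𝒩_V(v)·(n+5)}`. -/
noncomputable def pSpec (n : ℕ) (v : BV) : ℚ := (2 : ℚ) ^ (-((NV n v * (n + 5) : ℕ) : ℤ))

/-- The set `B(v)` of agent edges of `𝔇_n` belonging to the vertex `v`. -/
def Belongs (n : ℕ) (v : BV) (e : DV × DV) : Prop :=
  ∃ w, DEdgePair n v w ∧
    (e = (DV.x v w, DV.y v w) ∨ e = (DV.base v, DV.x v w) ∨ e = (DV.x v w, DV.base v))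

/-- Applying the improving switch `e` to the policy `π` yields `π'`. -/
def DApply (n : ℕ) (p : BV → ℚ) (π : DV → DV) (e : DV × DV) (π' : DV → DV) : Prop :=
  DImproving n p π e.1 e.2 ∧ π' = Function.update π e.1 e.2

/-- One step of Bland's policy iteration on `𝔇_n` with edge numbering `N`. -/
def IsBlandStepD (n : ℕ) (p : BV → ℚ) (N : DV → DV → ℕ) (π π' : DV → DV) : Prop :=
  ∃ u u', DImproving n p π u u' ∧ (∀ a b, DImproving n p π a b → N u u' ≤ N a b) ∧
    π' = Function.update π u u'

/-- One step of Dantzig's policy iteration on `𝔇_n`: apply an improving switch of maximal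
reduced costs. -/
def DantzigStep (n : ℕ) (p : BV → ℚ) (π π' : DV → DV) : Prop :=
  ∃ u u', DImproving n p π u u' ∧
    (∀ a b, DImproving n p π a b → zD n p π a b ≤ zD n p π u u') ∧
    π' = Function.update π u u'

/-- The finite set of vertices of `𝔅_n`, as a `Finset`. -/
noncomputable def BVSet (n : ℕ) : Finset BV :=
  {BV.t, BV.d, BV.s} ∪ (Finset.Icc 1 n).image BV.a ∪ (Finset.Icc 1 n).image BV.b

/-- The finite set of agent vertices of `𝔇_n`, as a `Finset`. -/
noncomputable def DAgentSet (n : ℕ) : Finset DV := by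
  classical
  exact ((BVSet n).image DV.base) ∪
    (((BVSet n ×ˢ BVSet n).filter fun e => DEdgePair n e.1 e.2).image fun e => DV.x e.1 e.2) ∪
    (((BVSet n ×ˢ BVSet n).filter fun e => DEdgePair n e.1 e.2).image fun e => DV.z e.1 e.2)

/-- The objective of the Largest Increase rule: the sum of the values of all agent vertices. -/
noncomputable def LIobj (n : ℕ) (p : BV → ℚ) (π : DV → DV) : ℚ :=
  ∑ u ∈ DAgentSet n, DVal n p π u

/-- One step of the Largest Increase policy iteration on `𝔇_n`: apply an improving switch
maximizing the sum of all agent vertex values of the resulting policy. -/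
def LIStep (n : ℕ) (p : BV → ℚ) (π π' : DV → DV) : Prop :=
  ∃ u u', DImproving n p π u u' ∧
    (∀ a b, DImproving n p π a b →
      LIobj n p (Function.update π a b) ≤ LIobj n p (Function.update π u u')) ∧
    π' = Function.update π u u'

/-- `N` is a Bland numbering `𝒩_{𝔇_n}` for `𝔇_n`: it is injective on agent edges, the edges
`(x v w, v)` all come first, within each gadget `(x v w, y v w)` precedes `(v, x v w)`,
the gadget blocks are ordered according to `𝒩_{𝔅_n}`, and the self-loop comes last. -/
def IsDBlandNumbering (n : ℕ) (N : DV → DV → ℕ) : Prop :=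
  (∀ u₁ u₂ u₁' u₂', DEdge n u₁ u₂ → DEdge n u₁' u₂' → N u₁ u₂ = N u₁' u₂' →
    u₁ = u₁' ∧ u₂ = u₂') ∧
  (∀ v w v' w', DEdgePair n v w → DEdgePair n v' w' →
    N (DV.x v w) (DV.base v) < N (DV.x v' w') (DV.y v' w')) ∧
  (∀ v w, DEdgePair n v w → N (DV.x v w) (DV.y v w) < N (DV.base v) (DV.x v w)) ∧
  (∀ v w v' w', DEdgePair n v w → DEdgePair n v' w' → NB n v w < NB n v' w' →
    N (DV.base v) (DV.x v w) < N (DV.x v' w') (DV.y v' w')) ∧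
  (∀ v w, DEdgePair n v w → N (DV.base v) (DV.x v w) < N (DV.base BV.s) (DV.base BV.s))

/-!
Adding `1` to `x` clears the bits below `ℓ := lzero x`, sets the bit `ℓ` and keeps all higher bits.
The phases only rewrite edges leaving vertices at levels `≤ ℓ`, so a set bit `i > ℓ` of `x + 1`
inherits its conditions from `π_x`, except that `leave ℓ` may have to be activated because `ℓ` is no
longer unset. The conditions for the new set bit `ℓ` are what the phases install, with two
exceptions that `π_x` already provides: `leave (ℓ - 2)`, because `ℓ - 2` and `ℓ - 1` are consecutive
set bits of `x`, and `stay (ℓ - 1)` whenever `ℓ` and `ℓ + 1` are unset bits below `msb1 x`, because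
then `stay (ℓ - 1)` belongs to the gap below the next higher set bit.
-/

/-! ### Bits of `x` and `x + 1` -/

theorem testBit_add_one {x k : ℕ} (hlow : ∀ i < k, x.testBit i = true) (hk : x.testBit k = false)
    (i : ℕ) :
    (x + 1).testBit i = if i < k then false else if i = k then true else x.testBit i := by
  induction k generalizing x i with
  | zero =>
    have hx : x % 2 = 0 := by simpa [Nat.testBit_zero] using hk
    cases i with
    | zero => simp [Nat.testBit_zero, show (x + 1) % 2 = 1 by omega]
    | succ i => simp [Nat.testBit_succ, show (x + 1) / 2 = x / 2 by omega]
  | succ k ih =>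
    have hx : x % 2 = 1 := by simpa [Nat.testBit_zero] using hlow 0 k.succ_pos
    cases i with
    | zero => simp [Nat.testBit_zero, show (x + 1) % 2 = 0 by omega]
    | succ i =>
      have hhalf := ih (x := x / 2)
        (fun j hj => by rw [← Nat.testBit_succ]; exact hlow _ (Nat.succ_lt_succ hj))
        (by rwa [← Nat.testBit_succ]) i
      rw [Nat.testBit_succ, show (x + 1) / 2 = x / 2 + 1 by omega, hhalf]
      simp [Nat.testBit_succ]

theorem isLeast_lzero (x : ℕ) : IsLeast {i | 1 ≤ i ∧ ¬ x.testBit (i - 1)} (lzero x) := by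
  have hne : {i | 1 ≤ i ∧ ¬ x.testBit (i - 1)}.Nonempty :=
    ⟨x + 1, by simp [Nat.testBit_eq_false_of_lt Nat.lt_two_pow_self]⟩
  exact ⟨Nat.sInf_mem hne, fun _ => Nat.sInf_le⟩

theorem one_le_lzero (x : ℕ) : 1 ≤ lzero x := (isLeast_lzero x).1.1

theorem testBit_lzero (x : ℕ) : x.testBit (lzero x - 1) = false := by
  simpa using (isLeast_lzero x).1.2

theorem testBit_of_lt_lzero {x i : ℕ} (hi : i + 1 < lzero x) : x.testBit i = true := by
  by_contra hbit
  have : lzero x ≤ i + 1 := (isLeast_lzero x).2 ⟨i.succ_pos, by simpa using hbit⟩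
  omega

theorem testBit_add_one_of_lt_lzero {x i : ℕ} (hi : i + 1 < lzero x) :
    (x + 1).testBit i = false := by
  rw [testBit_add_one (fun j hj => testBit_of_lt_lzero (by omega)) (testBit_lzero x),
    if_pos (by omega)]

theorem testBit_add_one_lzero (x : ℕ) : (x + 1).testBit (lzero x - 1) = true := by
  simp [testBit_add_one (fun j hj => testBit_of_lt_lzero (by omega)) (testBit_lzero x)]

theorem testBit_add_one_of_lzero_le {x i : ℕ} (hi : lzero x ≤ i) :
    (x + 1).testBit i = x.testBit i := by
  have := one_le_lzero x
  rw [testBit_add_one (fun j hj => testBit_of_lt_lzero (by omega)) (testBit_lzero x),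
    if_neg (by omega), if_neg (by omega)]

theorem lzero_add_two_le_of_testBit_eq_false {x i : ℕ} (hi : lzero x < i)
    (hunset : (x + 1).testBit (i - 2) = false) : lzero x + 2 ≤ i := by
  have hne : i ≠ lzero x + 1 := by
    rintro rfl
    rw [show lzero x + 1 - 2 = lzero x - 1 by omega, testBit_add_one_lzero] at hunset
    contradiction
  omega

theorem lt_of_testBit_of_lt_two_pow {x i n : ℕ} (hbit : x.testBit i) (hx : x < 2 ^ n) : i < n :=
  (Nat.pow_lt_pow_iff_right one_lt_two).1 ((Nat.ge_two_pow_of_testBit hbit).trans_lt hx)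

theorem lzero_le_of_add_one_lt {x n : ℕ} (hx : x + 1 < 2 ^ n) : lzero x ≤ n := by
  have := lt_of_testBit_of_lt_two_pow (testBit_add_one_lzero x) hx
  omega

theorem lsb_add_one (x : ℕ) : lsb (x + 1) = lzero x := by
  refine IsLeast.csInf_eq ⟨⟨one_le_lzero x, testBit_add_one_lzero x⟩, ?_⟩
  rintro i ⟨hi, hbit⟩
  by_contra hlt
  simp [testBit_add_one_of_lt_lzero (x := x) (i := i - 1) (by omega)] at hbit

theorem bddAbove_setBits (x : ℕ) : BddAbove {i | 1 ≤ i ∧ x.testBit (i - 1)} := by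
  refine ⟨x, ?_⟩
  rintro i ⟨-, hbit⟩
  have hpow : 2 ^ (i - 1) ≤ x := Nat.ge_two_pow_of_testBit hbit
  have : i - 1 < 2 ^ (i - 1) := Nat.lt_two_pow_self
  omega

theorem testBit_of_msb1_le {x i : ℕ} (hi : msb1 x ≤ i) : x.testBit i = false := by
  by_contra hbit
  have : i + 1 ≤ msb1 x := le_csSup (bddAbove_setBits x) (by simpa using hbit)
  omega

theorem testBit_msb1 {x : ℕ} (hx : x ≠ 0) : x.testBit (msb1 x - 1) = true := by
  obtain ⟨i, hi⟩ := Nat.exists_testBit_of_ne_zero hx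
  have hne : {i | 1 ≤ i ∧ x.testBit (i - 1)}.Nonempty := ⟨i + 1, i.succ_pos, hi⟩
  exact (Nat.sSup_mem hne (bddAbove_setBits x)).2

theorem ne_zero_of_lt_msb1 {x i : ℕ} (hi : i < msb1 x) : x ≠ 0 := by
  rintro rfl
  simp [msb1] at hi

theorem msb1_ne_lzero (x : ℕ) : msb1 x ≠ lzero x := by
  intro heq
  have hx : x ≠ 0 := ne_zero_of_lt_msb1 (heq ▸ one_le_lzero x : 0 < msb1 x)
  have hbit := testBit_msb1 hx
  simp [heq, testBit_lzero] at hbit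

theorem msb1_add_one (x : ℕ) : msb1 (x + 1) = max (msb1 x) (lzero x) := by
  refine IsGreatest.csSup_eq ⟨⟨le_max_of_le_right (one_le_lzero x), ?_⟩, ?_⟩
  · rcases le_or_gt (msb1 x) (lzero x) with h | h
    · rw [max_eq_right h]
      exact testBit_add_one_lzero x
    · rw [max_eq_left h.le, testBit_add_one_of_lzero_le (by omega)]
      exact testBit_msb1 (ne_zero_of_lt_msb1 h)
  · rintro i ⟨hi, hbit⟩
    by_contra! hlt
    obtain ⟨hmsb, hlzero⟩ := max_lt_iff.1 hlt
    rw [testBit_add_one_of_lzero_le (by omega), testBit_of_msb1_le (by omega)] at hbit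
    contradiction

theorem isGreatest_Lfun {i : ℕ} (hi : 3 ≤ i) (x : ℕ) :
    IsGreatest {j | 1 ≤ j ∧ j ≤ i - 2 ∧ (x.testBit (j - 1) ∨ j = 1)} (Lfun i x) := by
  have hbdd : BddAbove {j | 1 ≤ j ∧ j ≤ i - 2 ∧ (x.testBit (j - 1) ∨ j = 1)} :=
    ⟨i - 2, fun j hj => hj.2.1⟩
  exact ⟨Nat.sSup_mem ⟨1, le_rfl, by omega, Or.inr rfl⟩ hbdd, fun j hj => le_csSup hbdd hj⟩

theorem testBit_of_Lfun_lt {i x j : ℕ} (hi : 3 ≤ i) (hj : Lfun i x < j) (hji : j ≤ i - 2) :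
    x.testBit (j - 1) = false := by
  by_contra hbit
  have : j ≤ Lfun i x :=
    (isGreatest_Lfun hi x).2 ⟨by omega, hji, Or.inl (by simpa using hbit)⟩
  omega

theorem Lfun_lt_of_forall_testBit {i x j : ℕ} (hi : 3 ≤ i) (hj : 2 ≤ j)
    (hzero : ∀ k, j ≤ k → k ≤ i - 2 → x.testBit (k - 1) = false) : Lfun i x < j := by
  obtain ⟨-, hle, hbit | hone⟩ := (isGreatest_Lfun hi x).1
  · by_contra! hlt
    simp [hzero _ hlt hle] at hbit
  · omega

theorem lzero_le_Lfun_add_one {i x : ℕ} (hi : lzero x + 2 ≤ i) : lzero x ≤ Lfun i (x + 1) := by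
  have h1 := one_le_lzero x
  exact (isGreatest_Lfun (by omega) _).2 ⟨h1, by omega, Or.inl (testBit_add_one_lzero x)⟩

theorem Lfun_le_Lfun_add_one {i x : ℕ} (hi : lzero x + 2 ≤ i) : Lfun i x ≤ Lfun i (x + 1) := by
  have h1 := one_le_lzero x
  have hlzero := lzero_le_Lfun_add_one hi
  have hi3 : 3 ≤ i := by omega
  refine Nat.lt_succ_iff.1 (Lfun_lt_of_forall_testBit hi3 (by omega) fun k hk hki => ?_)
  rw [← testBit_add_one_of_lzero_le (x := x) (by omega)]
  exact testBit_of_Lfun_lt hi3 (by omega) hki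

/-! ### Edges of `𝔅_n` -/

theorem aN_of_le {n i : ℕ} (hi : i ≤ n) : aN n i = BV.a i := if_neg (by omega)

theorem bN_of_le {n i : ℕ} (hi : i ≤ n) : bN n i = BV.b i := if_neg (by omega)

theorem bEdge_a_iff {n i : ℕ} {v : BV} :
    BEdge n (BV.a i) v ↔ (1 ≤ i ∧ i ≤ n) ∧ (v = BV.b i ∨ v = aN n (i + 1) ∨ v = BV.t) := by
  grind [BEdge]

theorem bEdge_b_iff {n i : ℕ} {v : BV} :
    BEdge n (BV.b i) v ↔ (1 ≤ i ∧ i ≤ n) ∧ (v = bN n (i + 1) ∨ v = aN n (i + 1)) := by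
  grind [BEdge]

/-! ### Activating a list of edges -/

section ActivateList

variable {π : BV → BV} {L : List (BV × BV)} {u v : BV}

theorem activateList_of_forall_notMem (hu : ∀ v, (u, v) ∉ L) : activateList π L u = π u := by
  induction L generalizing π with
  | nil => rfl
  | cons e L ih =>
    have hne : u ≠ e.1 := by
      rintro rfl
      exact hu e.2 List.mem_cons_self
    calc activateList (Function.update π e.1 e.2) L u
        = Function.update π e.1 e.2 u := ih fun v hv => hu v (List.mem_cons_of_mem _ hv)
      _ = π u := Function.update_of_ne hne _ _

theorem activateList_of_mem (hmem : (u, v) ∈ L) (huniq : ∀ w, (u, w) ∈ L → w = v) :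
    activateList π L u = v := by
  induction L generalizing π with
  | nil => contradiction
  | cons e L ih =>
    have huniq' : ∀ w, (u, w) ∈ L → w = v := fun w hw => huniq w (List.mem_cons_of_mem _ hw)
    change activateList (Function.update π e.1 e.2) L u = v
    by_cases htail : (u, v) ∈ L
    · exact ih htail huniq'
    · obtain rfl : (u, v) = e := (List.mem_cons.1 hmem).resolve_right htail
      rw [activateList_of_forall_notMem fun w hw => htail (huniq' w hw ▸ hw),
        Function.update_self]

theorem activateList_concat_self (π : BV → BV) (L : List (BV × BV)) (u v : BV) :
    activateList π (L ++ [(u, v)]) u = v := by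
  simp [activateList]

theorem IsBPolicy.activateList {n : ℕ} (hπ : IsBPolicy n π)
    (hL : ∀ u v, (u, v) ∈ L → IsBVertex n u → BEdge n u v) : IsBPolicy n (activateList π L) := by
  induction L generalizing π with
  | nil => exact hπ
  | cons e L ih =>
    suffices hupd : IsBPolicy n (Function.update π e.1 e.2) from
      ih hupd fun u v huv => hL u v (List.mem_cons_of_mem _ huv)
    intro u hu
    rcases eq_or_ne u e.1 with rfl | hne
    · rw [Function.update_self]
      exact hL _ _ List.mem_cons_self hu
    · rw [Function.update_of_ne hne]
      exact hπ u hu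

end ActivateList

/-! ### The canonical phases -/

section Phases

variable {n x j : ℕ} {v : BV}

theorem t_mem_phaseList_iff : (BV.t, v) ∈ phaseList n x ↔ v = BV.a (lzero x) := by
  simp [phaseList]

theorem a_mem_phaseList_iff :
    (BV.a j, v) ∈ phaseList n x ↔
      (j = lzero x ∧ v = BV.b (lzero x)) ∨ (1 ≤ j ∧ j ≤ lzero x - 2 ∧ v = BV.t) ∨
        (j = lzero x - 1 ∧ v = BV.a (lzero x)) := by
  have hboard : (∃ i < lzero x - 2, i + 1 = j ∧ BV.t = v) ↔
      1 ≤ j ∧ j ≤ lzero x - 2 ∧ v = BV.t :=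
    ⟨by rintro ⟨i, hi, rfl, rfl⟩; exact ⟨by omega, by omega, rfl⟩,
      fun ⟨_, _, hv⟩ => ⟨j - 1, by omega, by omega, hv.symm⟩⟩
  simp only [phaseList, List.mem_append, List.mem_ite_nil_right, List.mem_cons, List.mem_map,
    List.mem_reverse, List.mem_range, List.not_mem_nil, Prod.mk.injEq, reduceCtorEq, BV.a.injEq,
    and_false, false_and, or_false, false_or, exists_false, hboard, or_assoc]

theorem b_mem_phaseList_iff :
    (BV.b j, v) ∈ phaseList n x ↔
      (x.testBit (lzero x) ∧ j = lzero x ∧ v = aN n (lzero x + 1)) ∨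
        ((x.testBit (lzero x) ∨ msb1 x < lzero x) ∧ j = lzero x - 1 ∧ v = BV.b (lzero x)) ∨
        (1 ≤ j ∧ j ≤ lzero x - 3 ∧ v = BV.b (j + 1)) ∨
        (lzero x = 2 ∧ j = 1 ∧ v = BV.a 2) := by
  have hstay : (∃ i < lzero x - 3, i + 1 = j ∧ BV.b (i + 2) = v) ↔
      1 ≤ j ∧ j ≤ lzero x - 3 ∧ v = BV.b (j + 1) :=
    ⟨by rintro ⟨i, hi, rfl, rfl⟩; exact ⟨by omega, by omega, rfl⟩,
      fun ⟨_, _, hv⟩ => ⟨j - 1, by omega, by omega, by rw [hv]; congr 1; omega⟩⟩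
  simp only [phaseList, List.mem_append, List.mem_ite_nil_right, List.mem_cons, List.mem_map,
    List.mem_reverse, List.mem_range, List.not_mem_nil, Prod.mk.injEq, reduceCtorEq, BV.b.injEq,
    and_false, false_and, or_false, exists_false, hstay, or_assoc]

theorem s_notMem_phaseList : (BV.s, v) ∉ phaseList n x := by
  simp [phaseList]

theorem d_notMem_phaseList : (BV.d, v) ∉ phaseList n x := by
  simp [phaseList]

-- For even `x` we have `lzero x = 1`, and truncated subtraction puts edges leaving `a 0` and `b 0`
-- into `phaseList n x`; these are not vertices of `𝔅_n`.
theorem bEdge_of_mem_phaseList {u : BV} (hl : lzero x ≤ n) (huv : (u, v) ∈ phaseList n x)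
    (hu : IsBVertex n u) : BEdge n u v := by
  have hl1 := one_le_lzero x
  cases u with
  | t => exact Or.inl ⟨lzero x, hl1, hl, rfl, t_mem_phaseList_iff.1 huv⟩
  | s => exact absurd huv s_notMem_phaseList
  | d => exact absurd huv d_notMem_phaseList
  | a j =>
    refine bEdge_a_iff.2 ⟨hu, ?_⟩
    have hj : 1 ≤ j := hu.1
    rcases a_mem_phaseList_iff.1 huv with ⟨rfl, rfl⟩ | ⟨-, -, rfl⟩ | ⟨rfl, rfl⟩
    · exact Or.inl rfl
    · exact Or.inr (Or.inr rfl)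
    · rw [Nat.sub_add_cancel hl1, aN_of_le hl]
      exact Or.inr (Or.inl rfl)
  | b j =>
    refine bEdge_b_iff.2 ⟨hu, ?_⟩
    have hj : 1 ≤ j := hu.1
    rcases b_mem_phaseList_iff.1 huv with
      ⟨-, rfl, rfl⟩ | ⟨-, rfl, rfl⟩ | ⟨-, hjl, rfl⟩ | ⟨hl2, rfl, rfl⟩
    · exact Or.inr rfl
    · rw [Nat.sub_add_cancel hl1, bN_of_le hl]
      exact Or.inl rfl
    · rw [bN_of_le (by omega)]
      exact Or.inl rfl
    · rw [aN_of_le (by omega)]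
      exact Or.inr rfl

end Phases

/-- The policy obtained from `π` by the canonical phases w.r.t. `x`. -/
noncomputable def applyPhases (n x : ℕ) (π : BV → BV) : BV → BV :=
  activateList π (phaseList n x)

section ApplyPhases

variable (n x : ℕ) (π : BV → BV)

theorem applyPhases_t : applyPhases n x π BV.t = BV.a (lzero x) :=
  activateList_of_mem (t_mem_phaseList_iff.2 rfl) fun _ => t_mem_phaseList_iff.1

theorem applyPhases_a_lzero : applyPhases n x π (BV.a (lzero x)) = BV.b (lzero x) := by
  have := one_le_lzero x
  refine activateList_of_mem (a_mem_phaseList_iff.2 (Or.inl ⟨rfl, rfl⟩)) fun w hw => ?_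
  grind [a_mem_phaseList_iff]

theorem applyPhases_a_lzero_sub_one :
    applyPhases n x π (BV.a (lzero x - 1)) = BV.a (lzero x) := by
  have := one_le_lzero x
  refine activateList_of_mem (a_mem_phaseList_iff.2 (Or.inr (Or.inr ⟨rfl, rfl⟩))) fun w hw => ?_
  grind [a_mem_phaseList_iff]

variable {n x} {j : ℕ}

theorem applyPhases_a_of_le (hj : 1 ≤ j) (hjl : j ≤ lzero x - 2) :
    applyPhases n x π (BV.a j) = BV.t := by
  refine activateList_of_mem (a_mem_phaseList_iff.2 (Or.inr (Or.inl ⟨hj, hjl, rfl⟩)))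
    fun w hw => ?_
  grind [a_mem_phaseList_iff]

theorem applyPhases_a_of_lzero_lt (hj : lzero x < j) :
    applyPhases n x π (BV.a j) = π (BV.a j) := by
  refine activateList_of_forall_notMem fun w hw => ?_
  grind [a_mem_phaseList_iff]

theorem applyPhases_b_of_le (hj : 1 ≤ j) (hjl : j ≤ lzero x - 3) :
    applyPhases n x π (BV.b j) = BV.b (j + 1) := by
  refine activateList_of_mem (b_mem_phaseList_iff.2 (Or.inr (Or.inr (Or.inl ⟨hj, hjl, rfl⟩))))
    fun w hw => ?_
  grind [b_mem_phaseList_iff]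

theorem applyPhases_b_lzero_sub_two (hl : 3 ≤ lzero x) :
    applyPhases n x π (BV.b (lzero x - 2)) = π (BV.b (lzero x - 2)) := by
  refine activateList_of_forall_notMem fun w hw => ?_
  grind [b_mem_phaseList_iff]

theorem applyPhases_b_lzero_sub_one (hl : 3 ≤ lzero x)
    (hbit : x.testBit (lzero x) ∨ msb1 x < lzero x) :
    applyPhases n x π (BV.b (lzero x - 1)) = BV.b (lzero x) := by
  refine activateList_of_mem (b_mem_phaseList_iff.2 (Or.inr (Or.inl ⟨hbit, rfl, rfl⟩)))
    fun w hw => ?_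
  grind [b_mem_phaseList_iff]

theorem applyPhases_b_lzero_sub_one_of_not (hl : 3 ≤ lzero x)
    (hbit : ¬ (x.testBit (lzero x) ∨ msb1 x < lzero x)) :
    applyPhases n x π (BV.b (lzero x - 1)) = π (BV.b (lzero x - 1)) := by
  refine activateList_of_forall_notMem fun w hw => ?_
  grind [b_mem_phaseList_iff]

-- When `lzero x = 2`, phase 2 may activate `stay 1`; phase 7 then overrides it by `leave 1`.
theorem applyPhases_b_one_of_lzero_eq_two (hl : lzero x = 2) :
    applyPhases n x π (BV.b 1) = BV.a 2 := by
  rw [applyPhases, phaseList, if_pos hl]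
  exact activateList_concat_self _ _ _ _

theorem applyPhases_b_lzero (hl : lzero x < n) (hbit : x.testBit (lzero x)) :
    applyPhases n x π (BV.b (lzero x)) = BV.a (lzero x + 1) := by
  have := one_le_lzero x
  rw [← aN_of_le (n := n) hl]
  refine activateList_of_mem (b_mem_phaseList_iff.2 (Or.inl ⟨hbit, rfl, rfl⟩)) fun w hw => ?_
  grind [b_mem_phaseList_iff]

theorem applyPhases_b_lzero_of_not_testBit (hbit : x.testBit (lzero x) = false) :
    applyPhases n x π (BV.b (lzero x)) = π (BV.b (lzero x)) := by
  have := one_le_lzero x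
  refine activateList_of_forall_notMem fun w hw => ?_
  grind [b_mem_phaseList_iff]

theorem applyPhases_b_of_lzero_lt (hj : lzero x < j) :
    applyPhases n x π (BV.b j) = π (BV.b j) := by
  refine activateList_of_forall_notMem fun w hw => ?_
  grind [b_mem_phaseList_iff]

theorem applyPhases_b_of_lzero_le_of_not_testBit (hj : lzero x ≤ j) (hbit : x.testBit j = false) :
    applyPhases n x π (BV.b j) = π (BV.b j) := by
  rcases hj.eq_or_lt with rfl | hlt
  · exact applyPhases_b_lzero_of_not_testBit π hbit
  · exact applyPhases_b_of_lzero_lt π hlt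

end ApplyPhases

/-! ### Canonical policies -/

/-- The conditions `<3d>` that a set bit `i ≥ 3` of `x` with `x_{i-1} = 0` imposes on the canonical
policy `π_x`, that is, the conditions on the gap of unset bits below `i`. -/
structure GapConditions (x : ℕ) (π : BV → BV) (i : ℕ) : Prop where
  stay_pred : π (BV.b (i - 1)) = BV.b i
  skip_pred : π (BV.a (i - 1)) = BV.a i
  leave_sub_two : π (BV.b (i - 2)) = BV.a (i - 1)
  board : ∀ j, Lfun i x < j → j ≤ i - 2 → π (BV.a j) = BV.t
  stay : ∀ j, Lfun i x < j → j ≤ i - 2 → π (BV.b (j - 1)) = BV.b j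
  board_one : Lfun i x = 1 → x.testBit 0 = false → π (BV.a 1) = BV.t

/-- The conditions `<3>` that a set bit `i` of `x` imposes on the canonical policy `π_x`. -/
structure SetBitConditions (x : ℕ) (π : BV → BV) (i : ℕ) : Prop where
  enter : π (BV.a i) = BV.b i
  leave_one : i = 2 → π (BV.b 1) = BV.a 2
  skip_one : i = 2 → x.testBit 0 = false → π (BV.a 1) = BV.a 2
  leave_pred : 3 ≤ i → x.testBit (i - 2) → π (BV.b (i - 1)) = BV.a i
  gap : 3 ≤ i → x.testBit (i - 2) = false → GapConditions x π i

theorem isCanonical_iff {n x : ℕ} {π : BV → BV} (hx : x ≠ 0) :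
    IsCanonical n x π ↔ IsBPolicy n π ∧ π BV.t = BV.a (lsb x) ∧
      π (BV.b (msb1 x)) = aN n (msb1 x + 1) ∧
      (∀ i, msb1 x < i → i ≤ n → π (BV.a i) = aN n (i + 1) ∧ π (BV.b i) = aN n (i + 1)) ∧
      ∀ i, 1 ≤ i → i ≤ n → x.testBit (i - 1) → SetBitConditions x π i := by
  simp only [IsCanonical, if_neg hx, Bool.not_eq_true]
  refine and_congr_right' (and_congr_right' (and_congr_right' (and_congr_right'
    (forall₄_congr fun i _ _ _ => ⟨?_, fun h => ?_⟩))))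
  · rintro ⟨henter, htwo, hset, hunset⟩
    refine ⟨henter, fun hi => (htwo hi).1, fun hi => (htwo hi).2, hset, fun hi hbit => ?_⟩
    obtain ⟨hstay, hskip, hleave, hboard, hone⟩ := hunset hi hbit
    exact ⟨hstay, hskip, hleave, fun j hj hji => (hboard (hj.trans_le hji) j hj hji).1,
      fun j hj hji => (hboard (hj.trans_le hji) j hj hji).2, hone⟩
  · refine ⟨h.enter, fun hi => ⟨h.leave_one hi, h.skip_one hi⟩, h.leave_pred, fun hi hbit => ?_⟩
    have hgap := h.gap hi hbit
    exact ⟨hgap.stay_pred, hgap.skip_pred, hgap.leave_sub_two,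
      fun _ j hj hji => ⟨hgap.board j hj hji, hgap.stay j hj hji⟩, hgap.board_one⟩

namespace IsCanonical

variable {n x i j : ℕ} {π : BV → BV}

theorem skip_leave_of_msb1_lt (hπ : IsCanonical n x π) (hi : msb1 x < i) (hin : i ≤ n) :
    π (BV.a i) = aN n (i + 1) ∧ π (BV.b i) = aN n (i + 1) := by
  rcases eq_or_ne x 0 with rfl | hx
  · exact hπ.2.2 i (by omega) hin
  · exact ((isCanonical_iff hx).1 hπ).2.2.2.1 i hi hin

theorem leave_msb1 (hπ : IsCanonical n x π) (hx : x ≠ 0) :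
    π (BV.b (msb1 x)) = aN n (msb1 x + 1) :=
  ((isCanonical_iff hx).1 hπ).2.2.1

theorem setBitConditions (hπ : IsCanonical n x π) (hi : 1 ≤ i) (hin : i ≤ n)
    (hbit : x.testBit (i - 1)) : SetBitConditions x π i := by
  have hx : x ≠ 0 := by rintro rfl; simp at hbit
  exact ((isCanonical_iff hx).1 hπ).2.2.2.2 i hi hin hbit

theorem leave_of_testBit (hπ : IsCanonical n x π) (hi : 1 ≤ i) (hin : i + 1 ≤ n)
    (hbit : x.testBit (i - 1)) (hbit' : x.testBit i) : π (BV.b i) = BV.a (i + 1) := by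
  have hcond := hπ.setBitConditions (i := i + 1) i.succ_pos hin hbit'
  rcases hi.eq_or_lt with rfl | hi
  · exact hcond.leave_one rfl
  · exact hcond.leave_pred (by omega) hbit

theorem stay_of_two_unset_bits (hπ : IsCanonical n x π) (hx : x < 2 ^ n) (hj : 2 ≤ j)
    (hjm : j < msb1 x) (hbit : x.testBit (j - 1) = false) (hbit' : x.testBit j = false) :
    π (BV.b (j - 1)) = BV.b j := by
  have hex : ∃ k, j < k ∧ x.testBit (k - 1) = true :=
    ⟨msb1 x, hjm, testBit_msb1 (ne_zero_of_lt_msb1 hjm)⟩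
  obtain ⟨k, ⟨hjk, hk⟩, hmin⟩ : ∃ k, (j < k ∧ x.testBit (k - 1) = true) ∧
      ∀ q < k, ¬ (j < q ∧ x.testBit (q - 1) = true) :=
    ⟨Nat.find hex, Nat.find_spec hex, fun _ => Nat.find_min hex⟩
  have hkn : k ≤ n := by
    have := lt_of_testBit_of_lt_two_pow hk hx
    omega
  have hkj : k ≠ j + 1 := by rintro rfl; simp [hbit'] at hk
  have hgap : ∀ q, j ≤ q → q < k → x.testBit (q - 1) = false := by
    intro q hjq hqk
    rcases hjq.eq_or_lt with rfl | hjq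
    · exact hbit
    · simpa [hjq] using hmin q hqk
  have hL : Lfun k x < j :=
    Lfun_lt_of_forall_testBit (by omega) hj fun q hjq hqk => hgap q hjq (by omega)
  have hset := hπ.setBitConditions (by omega) hkn hk
  exact (hset.gap (by omega) (hgap (k - 1) (by omega) (by omega))).stay j hL (by omega)

end IsCanonical

/-! ### From `x` to `x + 1` -/

section Increment

variable {n x i : ℕ} {π : BV → BV}

theorem IsCanonical.isBPolicy_applyPhases (hπ : IsCanonical n x π) (hl : lzero x ≤ n) :
    IsBPolicy n (applyPhases n x π) :=
  hπ.1.activateList fun _ _ => bEdge_of_mem_phaseList hl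

theorem IsCanonical.applyPhases_leave_msb1 (hπ : IsCanonical n x π) (hl : lzero x ≤ n) :
    applyPhases n x π (BV.b (msb1 (x + 1))) = aN n (msb1 (x + 1) + 1) := by
  rw [msb1_add_one]
  rcases le_or_gt (msb1 x) (lzero x) with hle | hgt
  · have hne := msb1_ne_lzero x
    rw [max_eq_right hle, applyPhases_b_lzero_of_not_testBit π (testBit_of_msb1_le hle)]
    exact (hπ.skip_leave_of_msb1_lt (by omega) hl).2
  · rw [max_eq_left hgt.le, applyPhases_b_of_lzero_lt π hgt]
    exact hπ.leave_msb1 (ne_zero_of_lt_msb1 hgt)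

theorem IsCanonical.applyPhases_skip_leave_of_msb1_lt (hπ : IsCanonical n x π)
    (hi : msb1 (x + 1) < i) (hin : i ≤ n) :
    applyPhases n x π (BV.a i) = aN n (i + 1) ∧ applyPhases n x π (BV.b i) = aN n (i + 1) := by
  obtain ⟨hmsb, hl⟩ := max_lt_iff.1 (msb1_add_one x ▸ hi)
  rw [applyPhases_a_of_lzero_lt π hl, applyPhases_b_of_lzero_lt π hl]
  exact hπ.skip_leave_of_msb1_lt hmsb hin

theorem IsCanonical.applyPhases_stay_lzero_sub_one (hπ : IsCanonical n x π) (hx : x < 2 ^ n)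
    (hl : 3 ≤ lzero x) : applyPhases n x π (BV.b (lzero x - 1)) = BV.b (lzero x) := by
  by_cases hbit : x.testBit (lzero x) ∨ msb1 x < lzero x
  · exact applyPhases_b_lzero_sub_one π hl hbit
  · rw [applyPhases_b_lzero_sub_one_of_not π hl hbit]
    obtain ⟨hunset, hmsb⟩ := not_or.1 hbit
    have hlt : lzero x < msb1 x := (not_lt.1 hmsb).lt_of_ne (msb1_ne_lzero x).symm
    exact hπ.stay_of_two_unset_bits hx (by omega) hlt (testBit_lzero x) (by simpa using hunset)

theorem IsCanonical.gapConditions_lzero (hπ : IsCanonical n x π) (hx : x + 1 < 2 ^ n)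
    (hl : 3 ≤ lzero x) : GapConditions (x + 1) (applyPhases n x π) (lzero x) where
  stay_pred := hπ.applyPhases_stay_lzero_sub_one (by omega) hl
  skip_pred := applyPhases_a_lzero_sub_one n x π
  leave_sub_two := by
    have hln := lzero_le_of_add_one_lt hx
    rw [applyPhases_b_lzero_sub_two π hl,
      hπ.leave_of_testBit (by omega) (by omega) (testBit_of_lt_lzero (by omega))
        (testBit_of_lt_lzero (by omega))]
    congr 1
    omega
  board j hj hjl := applyPhases_a_of_le π (by omega) hjl
  stay j hj hjl := by
    have hL := (isGreatest_Lfun hl (x + 1)).1.1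
    rw [applyPhases_b_of_le π (by omega) (by omega), Nat.sub_add_cancel (by omega)]
  board_one _ _ := applyPhases_a_of_le π le_rfl (by omega)

theorem IsCanonical.setBitConditions_lzero (hπ : IsCanonical n x π) (hx : x + 1 < 2 ^ n) :
    SetBitConditions (x + 1) (applyPhases n x π) (lzero x) where
  enter := applyPhases_a_lzero n x π
  leave_one := applyPhases_b_one_of_lzero_eq_two π
  skip_one hl _ := by simpa only [hl] using applyPhases_a_lzero_sub_one n x π
  leave_pred hl hbit := by
    rw [testBit_add_one_of_lt_lzero (by omega)] at hbit
    contradiction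
  gap hl _ := hπ.gapConditions_lzero hx hl

theorem GapConditions.applyPhases_of_lzero_add_two_le (h : GapConditions x π i)
    (hi : lzero x + 2 ≤ i) (hunset : x.testBit (i - 2) = false) :
    GapConditions (x + 1) (applyPhases n x π) i where
  stay_pred := (applyPhases_b_of_lzero_lt π (by omega)).trans h.stay_pred
  skip_pred := (applyPhases_a_of_lzero_lt π (by omega)).trans h.skip_pred
  leave_sub_two :=
    (applyPhases_b_of_lzero_le_of_not_testBit π (by omega) hunset).trans h.leave_sub_two
  board j hj hji := by
    rw [applyPhases_a_of_lzero_lt π ((lzero_le_Lfun_add_one hi).trans_lt hj)]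
    exact h.board j ((Lfun_le_Lfun_add_one hi).trans_lt hj) hji
  stay j hj hji := by
    have hl := one_le_lzero x
    have hlj : lzero x < j := (lzero_le_Lfun_add_one hi).trans_lt hj
    have hLj : Lfun i x < j := (Lfun_le_Lfun_add_one hi).trans_lt hj
    have hunset' : x.testBit (j - 1) = false := testBit_of_Lfun_lt (by omega) hLj hji
    rw [applyPhases_b_of_lzero_le_of_not_testBit π (by omega) hunset']
    exact h.stay j hLj hji
  board_one hL hbit0 := by
    have hl := one_le_lzero x
    have hle := lzero_le_Lfun_add_one hi
    have hbit := testBit_add_one_lzero x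
    rw [show lzero x = 1 by omega, hbit0] at hbit
    contradiction

theorem IsCanonical.setBitConditions_of_lzero_lt (hπ : IsCanonical n x π) (hi : lzero x < i)
    (hin : i ≤ n) (hbit : (x + 1).testBit (i - 1)) :
    SetBitConditions (x + 1) (applyPhases n x π) i := by
  have hl := one_le_lzero x
  rw [testBit_add_one_of_lzero_le (by omega)] at hbit
  have hcond := hπ.setBitConditions (by omega) hin hbit
  have hleave : i = lzero x + 1 → applyPhases n x π (BV.b (i - 1)) = BV.a i := by
    rintro rfl
    exact applyPhases_b_lzero π hin hbit
  constructor
  case enter => exact (applyPhases_a_of_lzero_lt π hi).trans hcond.enter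
  case leave_one =>
    rintro rfl
    exact hleave (by omega)
  case skip_one =>
    rintro rfl hunset
    have := lzero_add_two_le_of_testBit_eq_false hi hunset
    omega
  case leave_pred =>
    intro hi3 hset
    rcases (Nat.succ_le_of_lt hi).eq_or_lt with heq | hlt
    · exact hleave heq.symm
    · rw [testBit_add_one_of_lzero_le (by omega)] at hset
      exact (applyPhases_b_of_lzero_lt π (by omega)).trans (hcond.leave_pred hi3 hset)
  case gap =>
    intro hi3 hunset
    have hi2 := lzero_add_two_le_of_testBit_eq_false hi hunset
    rw [testBit_add_one_of_lzero_le (by omega)] at hunset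
    exact (hcond.gap hi3 hunset).applyPhases_of_lzero_add_two_le hi2 hunset

end Increment

theorem stmt5_general (n x : ℕ) (hx : x + 1 < 2 ^ n) (π : BV → BV) (hπ : IsCanonical n x π) :
    IsCanonical n (x + 1) (activateList π (phaseList n x)) := by
  have hl : lzero x ≤ n := lzero_le_of_add_one_lt hx
  refine (isCanonical_iff x.succ_ne_zero).2 ⟨hπ.isBPolicy_applyPhases hl, ?_,
    hπ.applyPhases_leave_msb1 hl, fun i => hπ.applyPhases_skip_leave_of_msb1_lt,
    fun i hi hin hbit => ?_⟩
  · rw [lsb_add_one]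
    exact applyPhases_t n x π
  · rcases lt_trichotomy i (lzero x) with hlt | rfl | hgt
    · simp [testBit_add_one_of_lt_lzero (x := x) (i := i - 1) (by omega)] at hbit
    · exact hπ.setBitConditions_lzero hx
    · exact hπ.setBitConditions_of_lzero_lt hgt hin hbit

/-- For every odd `x ∈ {1,…,2^n-3}`, applying the canonical phases w.r.t. `x`, in order,
to the canonical policy `π_x` yields the canonical policy `π_{x+1}`. -/
theorem stmt5 (n : ℕ) (hn : 1 ≤ n) (x : ℕ) (hx1 : 1 ≤ x) (hx : x ≤ 2 ^ n - 3) (hodd : Odd x)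
    (π : BV → BV) (hπ : IsCanonical n x π) :
    IsCanonical n (x + 1) (activateList π (phaseList n x)) :=
  stmt5_general n x (by omega) π hπ
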